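/- arXiv:1907.12034 — 2 statements merged into one kernel-verified Lean document; each statement's English description precedes it below -/
import Mathlib

section
/- There exists a real constant c > 0 such that for every integer σ ≥ 9 and every integer n ≥ σ², there exists a word w over the alphabet Fin (σ+1) with w.length ≤ n and an integer m such that the number of minimal absent words of w having length exactly m is at least c · n · σ · (Real.log σ) / (Real.log n). -/
/-- The set of minimal absent words of a factor-closed language `L`. -/
def MAW {α : Type*} (L : Set (List α)) : Set (List α) :=
  {v | 2 ≤ v.length ∧ v ∉ L ∧ v.tail ∈ L ∧ v.dropLast ∈ L}

/-- The set of factors of a word `w`. -/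
def Factors {α : Type*} (w : List α) : Set (List α) := {u | u <:+: w}

/-!
Fix an alphabet `A` of `σ` letters, a set `X` of `M` words of length `l` over `A`, and a further
letter `#`. In the word obtained by writing `#` before each of the words `a x` and `x b`, with
`a, b ∈ A` and `x ∈ X`, every `#`-free factor lies inside one of these blocks, which have length
`l + 1`. So each of the `σ² M` words `a x b` is absent, while `a x` and `x b` occur: a word of
length at most `2 σ M (l + 2)` has at least `σ² M` minimal absent words of length `l + 2`. Taking
`l = ⌊log_σ n⌋` and `M` as large as the length bound `n` permits gives the order `n σ / log_σ n`; if
`n` is too small even for `M = 1`, then `n / log_σ n` is `O(σ)`, and `l = 0`, `M = 1` suffices.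
-/

section Delimited

variable {α : Type*} {s : α} {u v : List α} {L : List (List α)}

/-- The word `s u₁ s u₂ ⋯ s uₖ` formed from the blocks `u₁, …, uₖ` of `L`. It serves to realise a
prescribed set of blocks inside one word, the letter `s` keeping distinct blocks apart. -/
def delimitedConcat (s : α) (L : List (List α)) : List α := L.flatMap (s :: ·)

theorem delimitedConcat_cons : delimitedConcat s (u :: L) = s :: (u ++ delimitedConcat s L) :=
  rfl

theorem length_delimitedConcat {k : ℕ} (hL : ∀ u ∈ L, u.length = k) :
    (delimitedConcat s L).length = L.length * (k + 1) := by
  induction L with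
  | nil => rw [List.length_nil, Nat.zero_mul]; rfl
  | cons u L ih =>
    rw [List.forall_mem_cons] at hL
    rw [delimitedConcat_cons, List.length_cons, List.length_append, hL.1, ih hL.2,
      List.length_cons]
    ring

theorem eq_nil_of_prefix_delimitedConcat (hs : s ∉ u) (hu : u <+: delimitedConcat s L) :
    u = [] := by
  cases L with
  | nil => exact List.prefix_nil.mp hu
  | cons v L =>
    rcases List.prefix_cons_iff.mp hu with rfl | ⟨t, rfl, -⟩
    · rfl
    · exact absurd List.mem_cons_self hs

theorem infix_delimitedConcat_of_mem (hu : u ∈ L) : u <:+: delimitedConcat s L :=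
  (List.suffix_cons s u).isInfix.trans
    (List.infix_of_mem_flatten (List.mem_map_of_mem (f := (s :: ·)) hu))

theorem infix_delimitedConcat_iff (hv : v ≠ []) (hs : s ∉ v) :
    v <:+: delimitedConcat s L ↔ ∃ u ∈ L, v <:+: u := by
  refine ⟨fun h ↦ ?_, fun ⟨u, hu, hvu⟩ ↦ hvu.trans (infix_delimitedConcat_of_mem hu)⟩
  induction L with
  | nil => exact absurd (List.infix_nil.mp h) hv
  | cons u L ih =>
    rw [List.exists_mem_cons_iff]
    rcases List.infix_cons_iff.mp h with hpre | hinf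
    · exact absurd (eq_nil_of_prefix_delimitedConcat (L := u :: L) hs hpre) hv
    rcases List.infix_append_iff.mp hinf with hu | hL | ⟨p, q, rfl, hp, hq⟩
    · exact .inl hu
    · exact .inr (ih hL)
    · have hq_nil : q = [] :=
        eq_nil_of_prefix_delimitedConcat (fun h ↦ hs (List.mem_append_right p h)) hq
      rw [hq_nil, List.append_nil]
      exact .inl hp.isInfix

theorem mem_MAW_factors_delimitedConcat_iff (hs : s ∉ v) :
    v ∈ MAW (Factors (delimitedConcat s L)) ↔ v ∈ MAW {x | ∃ u ∈ L, x <:+: u} := by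
  refine and_congr_right fun hlen ↦ ?_
  have hv : v ≠ [] := List.ne_nil_of_length_pos (by lia)
  have htail : v.tail ≠ [] := List.ne_nil_of_length_pos (by rw [List.length_tail]; lia)
  have hinit : v.dropLast ≠ [] := List.ne_nil_of_length_pos (by rw [List.length_dropLast]; lia)
  exact and_congr (infix_delimitedConcat_iff hv hs).not <| and_congr
    (infix_delimitedConcat_iff htail fun h ↦ hs (List.mem_of_mem_tail h))
    (infix_delimitedConcat_iff hinit fun h ↦ hs (List.mem_of_mem_dropLast h))

end Delimited

section Extensions

variable {α : Type*} [DecidableEq α] {A : Finset α} {X : Finset (List α)} {v : List α} {l : ℕ}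

/-- The words `a x` and `x a` with `a ∈ A` and `x ∈ X`: the blocks out of which the word with many
minimal absent words is built. -/
def oneSidedExtensions (A : Finset α) (X : Finset (List α)) : Finset (List α) :=
  Finset.image₂ (fun a x ↦ a :: x) A X ∪ Finset.image₂ (fun a x ↦ x ++ [a]) A X

/-- The words `a x b` with `a, b ∈ A` and `x ∈ X`, which become the minimal absent words. -/
def twoSidedExtensions (A : Finset α) (X : Finset (List α)) : Finset (List α) :=
  Finset.image₂ (fun p x ↦ p.1 :: (x ++ [p.2])) (A ×ˢ A) X

theorem mem_oneSidedExtensions :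
    v ∈ oneSidedExtensions A X ↔ ∃ a ∈ A, ∃ x ∈ X, a :: x = v ∨ x ++ [a] = v := by
  simp only [oneSidedExtensions, Finset.mem_union, Finset.mem_image₂]
  grind

theorem mem_twoSidedExtensions :
    v ∈ twoSidedExtensions A X ↔ ∃ a ∈ A, ∃ b ∈ A, ∃ x ∈ X, a :: (x ++ [b]) = v := by
  simp only [twoSidedExtensions, Finset.mem_image₂, Prod.exists, Finset.mem_product]
  grind

theorem card_oneSidedExtensions_le : (oneSidedExtensions A X).card ≤ 2 * (A.card * X.card) := by
  rw [two_mul]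
  exact (Finset.card_union_le _ _).trans
    (add_le_add (Finset.card_image₂_le _ _ _) (Finset.card_image₂_le _ _ _))

theorem card_twoSidedExtensions : (twoSidedExtensions A X).card = A.card ^ 2 * X.card := by
  have hinj : Function.Injective2 fun (p : α × α) (x : List α) ↦ p.1 :: (x ++ [p.2]) := by
    rintro ⟨a, b⟩ ⟨a', b'⟩ x x' h
    obtain ⟨ha, hxb⟩ := List.cons.inj h
    obtain ⟨hx, hb⟩ := List.append_inj' hxb rfl
    exact ⟨Prod.ext ha (List.singleton_inj.mp hb), hx⟩
  rw [twoSidedExtensions, Finset.card_image₂ hinj, Finset.card_product, sq]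

theorem length_of_mem_oneSidedExtensions (hX : ∀ x ∈ X, x.length = l)
    (hv : v ∈ oneSidedExtensions A X) : v.length = l + 1 := by
  obtain ⟨a, -, x, hx, rfl | rfl⟩ := mem_oneSidedExtensions.mp hv
  · rw [List.length_cons, hX x hx]
  · rw [List.length_append, hX x hx, List.length_singleton]

theorem length_of_mem_twoSidedExtensions (hX : ∀ x ∈ X, x.length = l)
    (hv : v ∈ twoSidedExtensions A X) : v.length = l + 2 := by
  obtain ⟨a, -, b, -, x, hx, rfl⟩ := mem_twoSidedExtensions.mp hv
  rw [List.length_cons, List.length_append, hX x hx, List.length_singleton]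

theorem notMem_of_mem_twoSidedExtensions {s : α} (hsA : s ∉ A) (hsX : ∀ x ∈ X, s ∉ x)
    (hv : v ∈ twoSidedExtensions A X) : s ∉ v := by
  obtain ⟨a, ha, b, hb, x, hx, rfl⟩ := mem_twoSidedExtensions.mp hv
  have := hsX x hx
  grind

theorem mem_MAW_of_mem_twoSidedExtensions (hX : ∀ x ∈ X, x.length = l)
    (hv : v ∈ twoSidedExtensions A X) :
    v ∈ MAW {x | ∃ u ∈ oneSidedExtensions A X, x <:+: u} := by
  have hlen : v.length = l + 2 := length_of_mem_twoSidedExtensions hX hv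
  refine ⟨by lia, ?_, ?_⟩
  · rintro ⟨u, hu, hvu⟩
    have := length_of_mem_oneSidedExtensions hX hu
    have := hvu.length_le
    lia
  obtain ⟨a, ha, b, hb, x, hx, rfl⟩ := mem_twoSidedExtensions.mp hv
  constructor
  · exact ⟨x ++ [b], mem_oneSidedExtensions.mpr ⟨b, hb, x, hx, .inr rfl⟩, List.infix_rfl⟩
  · rw [← List.cons_append, List.dropLast_concat]
    exact ⟨a :: x, mem_oneSidedExtensions.mpr ⟨a, ha, x, hx, .inl rfl⟩, List.infix_rfl⟩

end Extensions

section Construction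

variable {α : Type*} {A : Finset α} {l M : ℕ}

theorem exists_card_eq_of_le_card_pow (hM : M ≤ A.card ^ l) :
    ∃ X : Finset (List α), X.card = M ∧ ∀ x ∈ X, x.length = l ∧ ∀ a ∈ x, a ∈ A := by
  obtain ⟨F, hF, hcard⟩ : ∃ F ⊆ Fintype.piFinset fun _ : Fin l ↦ A, F.card = M :=
    Finset.exists_subset_card_eq (by rwa [Fintype.card_piFinset_const])
  refine ⟨F.map ⟨List.ofFn, List.ofFn_injective⟩, by rw [Finset.card_map, hcard], fun x hx ↦ ?_⟩
  obtain ⟨f, hf, rfl⟩ := Finset.mem_map.mp hx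
  exact ⟨List.length_ofFn, List.forall_mem_ofFn_iff.mpr (Fintype.mem_piFinset.mp (hF hf))⟩

theorem exists_length_le_card_le_ncard_MAW [Finite α] {s : α} (hs : s ∉ A)
    (hM : M ≤ A.card ^ l) :
    ∃ w : List α, w.length ≤ 2 * (A.card * M) * (l + 2) ∧
      A.card ^ 2 * M ≤ {v | v ∈ MAW (Factors w) ∧ v.length = l + 2}.ncard := by
  classical
  obtain ⟨X, rfl, hX⟩ := exists_card_eq_of_le_card_pow hM
  have hlen : ∀ x ∈ X, x.length = l := fun x hx ↦ (hX x hx).1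
  have hsX : ∀ x ∈ X, s ∉ x := fun x hx hsx ↦ hs ((hX x hx).2 s hsx)
  refine ⟨delimitedConcat s (oneSidedExtensions A X).toList, ?_, ?_⟩
  · rw [length_delimitedConcat fun u hu ↦
      length_of_mem_oneSidedExtensions hlen (Finset.mem_toList.mp hu), Finset.length_toList]
    exact Nat.mul_le_mul_right _ card_oneSidedExtensions_le
  · rw [← card_twoSidedExtensions, ← Set.ncard_coe_finset]
    refine Set.ncard_le_ncard (fun v hv ↦ ⟨?_, length_of_mem_twoSidedExtensions hlen hv⟩)
      ((List.finite_length_eq α (l + 2)).subset fun v hv ↦ hv.2)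
    rw [mem_MAW_factors_delimitedConcat_iff (notMem_of_mem_twoSidedExtensions hs hsX hv)]
    simpa only [Finset.mem_toList] using mem_MAW_of_mem_twoSidedExtensions hlen hv

end Construction

theorem exists_le_pow_and_le_mul_log {σ n : ℕ} (hσ : 2 ≤ σ) (hn : 4 * σ ≤ n) :
    ∃ l M : ℕ, M ≤ σ ^ l ∧ 2 * (σ * M) * (l + 2) ≤ n ∧ n ≤ 12 * (σ * M) * Nat.log σ n := by
  set l := Nat.log σ n
  have hl : 1 ≤ l := Nat.log_pos hσ (by lia)
  set D := 2 * σ * (l + 2) with hD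
  have hDl : D ≤ 6 * σ * l := by rw [hD]; nlinarith
  rcases lt_or_ge n D with hnD | hDn
  · exact ⟨0, 1, by simp, by lia, by nlinarith⟩
  · have hDpos : 0 < D := by positivity
    have hMD : n / D * D ≤ n := Nat.div_mul_le_self n D
    have hM : n / D ≤ σ ^ l := by
      have hlt : n / D * σ < σ ^ l * σ := calc
        n / D * σ ≤ n / D * D := Nat.mul_le_mul_left _ (by rw [hD]; nlinarith)
        _ ≤ n := hMD
        _ < σ ^ (l + 1) := Nat.lt_pow_succ_log_self hσ n
        _ = σ ^ l * σ := pow_succ σ l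
      exact (Nat.lt_of_mul_lt_mul_right hlt).le
    have hn2 : n ≤ 2 * (n / D * D) := by
      have hlt : n < n / D * D + D := Nat.lt_div_mul_add hDpos
      have hDM : D ≤ n / D * D := Nat.le_mul_of_pos_left D (Nat.div_pos hDn hDpos)
      lia
    refine ⟨l, n / D, hM, hMD.trans_eq' (by rw [hD]; ring), ?_⟩
    calc n ≤ 2 * (n / D * D) := hn2
      _ ≤ 2 * (n / D * (6 * σ * l)) := by gcongr
      _ = 12 * (σ * (n / D)) * l := by ring

theorem maw_same_length_lower_bound_general {σ n : ℕ} (hσ : 2 ≤ σ) (hn : 4 * σ ≤ n) :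
    ∃ w : List (Fin (σ + 1)), w.length ≤ n ∧
      ∃ m : ℕ,
        1 / 12 * n * σ * Real.log σ / Real.log n ≤
          ({v | v ∈ MAW (Factors w) ∧ v.length = m}).ncard := by
  obtain ⟨l, M, hM, hlen, hn_le⟩ := exists_le_pow_and_le_mul_log hσ hn
  have hcard : ({Fin.last σ}ᶜ : Finset (Fin (σ + 1))).card = σ := by
    simp [Finset.card_compl]
  obtain ⟨w, hw, hcount⟩ := exists_length_le_card_le_ncard_MAW (A := {Fin.last σ}ᶜ)
    (s := Fin.last σ) (by simp) (hM.trans_eq (by rw [hcard]))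
  rw [hcard] at hw hcount
  refine ⟨w, hw.trans hlen, l + 2, ?_⟩
  have hlogb : 0 < Real.logb σ n := Real.logb_pos (by norm_cast) (by norm_cast; lia)
  calc 1 / 12 * n * σ * Real.log σ / Real.log n
      = 1 / 12 * n * σ / Real.logb σ n := by rw [Real.logb, div_div_eq_mul_div]
    _ ≤ (σ ^ 2 * M : ℕ) := ?_
    _ ≤ _ := by exact_mod_cast hcount
  rw [div_le_iff₀ hlogb]
  calc 1 / 12 * (n : ℝ) * σ
      ≤ 1 / 12 * (12 * (σ * M) * Nat.log σ n : ℕ) * σ := by gcongr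
    _ = (σ ^ 2 * M : ℕ) * (Nat.log σ n : ℝ) := by push_cast; ring
    _ ≤ (σ ^ 2 * M : ℕ) * Real.logb σ n := by gcongr; exact Real.natLog_le_logb n σ

/-- There is a constant `c > 0` such that for every `σ ≥ 9` and `n ≥ σ²` there is a word
over `Fin (σ+1)` of length at most `n` having `Ω(n·σ/log_σ n)` minimal absent words all
of the same length. -/
theorem maw_same_length_lower_bound :
    ∃ c : ℝ, 0 < c ∧ ∀ σ n : ℕ, 9 ≤ σ → σ ^ 2 ≤ n →
      ∃ w : List (Fin (σ + 1)), w.length ≤ n ∧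
        ∃ m : ℕ,
          c * n * σ * Real.log σ / Real.log n ≤
            ({v | v ∈ MAW (Factors w) ∧ v.length = m}).ncard :=
  ⟨1 / 12, by norm_num, fun σ n hσ hn ↦
    maw_same_length_lower_bound_general (by lia) (by nlinarith)⟩
end

section
/- For all integers s ≥ 1 and N ≥ 1, setting n = (N+1)(s+1) + s·N, there exists a simple graph G on Fin n with G.IsTree and an edge labeling f : G.edgeSet → Fin (s+1) such that the set of minimal absent words of the path language L(G,f) has cardinality at least s³·N². -/
/-- The path language of an edge-labeled graph: all words obtained as the sequences of
labels of the successive edges of walks that are paths (including trivial walks, which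
contribute the empty word). -/
def pathLang {n σ : ℕ} (G : SimpleGraph (Fin n)) (f : G.edgeSet → Fin σ) :
    Set (List (Fin σ)) :=
  {l | ∃ (u v : Fin n) (p : G.Walk u v), p.IsPath ∧
    l = p.darts.map (fun d => f ⟨d.edge, d.edge_mem⟩)}

/-!
In a tree, a path crosses the boundary of a connected vertex set at most twice. So if every edge
with a nonzero label leaves a fixed connected set, then every word with three nonzero letters is
absent. That set is taken to be a long path with all its edges labeled `0`. From each of its
vertices but one end there emanate hairs carrying all the nonzero labels, and from that end further
legs that start with the nonzero labels and continue with `0`s. Walking from a hair through the end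
of the path into a leg reads any word `x 0ⁱ y 0ʲ`, so all words `x 0ⁱ y 0ʲ z` with `x, y, z` nonzero
and `1 ≤ i, j ≤ N` are minimal absent words.
-/

section

variable {V W α : Type*}

/-- The path language of an arbitrary graph, with edge labels read off from a labeling of all
unordered pairs of vertices; this form is easy to transport along graph isomorphisms. -/
def pathWords (G : SimpleGraph V) (g : Sym2 V → α) : Set (List α) :=
  {l | ∃ (u v : V) (p : G.Walk u v), p.IsPath ∧ p.edges.map g = l}

theorem pathLang_eq_pathWords {n σ : ℕ} (G : SimpleGraph (Fin n)) (g : Sym2 (Fin n) → Fin σ) :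
    pathLang G (fun e => g e) = pathWords G g := by
  simp only [pathLang, pathWords, SimpleGraph.Walk.edges, List.map_map, Function.comp_def,
    eq_comm]

theorem pathWords_comp_map_subset {G : SimpleGraph V} {H : SimpleGraph W} (φ : G →g H)
    (hφ : Function.Injective φ) (g : Sym2 W → α) :
    pathWords G (g ∘ Sym2.map φ) ⊆ pathWords H g := by
  rintro _ ⟨u, v, p, hp, rfl⟩
  exact ⟨φ u, φ v, p.map φ, hp.map hφ, by
    rw [SimpleGraph.Walk.edges_map, List.map_map]⟩

theorem pathWords_comp_map_iso {G : SimpleGraph V} {H : SimpleGraph W} (φ : G ≃g H)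
    (g : Sym2 W → α) : pathWords G (g ∘ Sym2.map φ) = pathWords H g := by
  refine (pathWords_comp_map_subset φ.toHom φ.injective g).antisymm ?_
  have map_map_symm : (g ∘ Sym2.map φ) ∘ Sym2.map φ.symm = g := by
    funext e
    simp [Sym2.map_map]
  calc pathWords H g = pathWords H ((g ∘ Sym2.map φ) ∘ Sym2.map φ.symm) := by rw [map_map_symm]
    _ ⊆ pathWords G (g ∘ Sym2.map φ) :=
        pathWords_comp_map_subset φ.symm.toHom φ.symm.injective _

theorem reverse_mem_pathWords {G : SimpleGraph V} {g : Sym2 V → α} {l : List α}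
    (hl : l ∈ pathWords G g) : l.reverse ∈ pathWords G g := by
  obtain ⟨u, v, p, hp, rfl⟩ := hl
  exact ⟨v, u, p.reverse, hp.reverse, by simp⟩

theorem finite_pathWords [Finite V] (G : SimpleGraph V) (g : Sym2 V → α) :
    (pathWords G g).Finite := by
  classical
  cases nonempty_fintype V
  have hsub : pathWords G g ⊆
      ⋃ (u : V) (v : V), Set.range fun p : G.Path u v => p.1.edges.map g := by
    rintro l ⟨u, v, p, hp, hl⟩
    exact Set.mem_iUnion₂.2 ⟨u, v, ⟨p, hp⟩, hl⟩
  exact (Set.finite_iUnion fun u => Set.finite_iUnion fun v => Set.finite_range _).subset hsub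

theorem finite_maw [Finite α] {L : Set (List α)} (hL : L.Finite) : (MAW L).Finite := by
  refine (Set.Finite.image2 List.cons Set.finite_univ hL).subset ?_
  rintro (_ | ⟨a, l⟩) ⟨hlen, -, htail, -⟩
  · simp at hlen
  · exact ⟨a, trivial, l, htail, rfl⟩

/-- The graph joining every vertex to its parent; fixed points of `parent` are the roots. -/
def parentGraph (parent : V → V) : SimpleGraph V :=
  SimpleGraph.fromRel fun u v => parent u = v

theorem parentGraph_adj_parent {parent : V → V} {v : V} (hv : v ≠ parent v) :
    (parentGraph parent).Adj v (parent v) :=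
  (SimpleGraph.fromRel_adj _ _ _).2 ⟨hv, Or.inl rfl⟩

theorem parentGraph_reachable_iterate (parent : V → V) (k : ℕ) (v : V) :
    (parentGraph parent).Reachable v (parent^[k] v) := by
  induction k with
  | zero => rfl
  | succ k ih =>
    rw [Function.iterate_succ_apply']
    by_cases hv : parent^[k] v = parent (parent^[k] v)
    · rwa [← hv]
    · exact ih.trans (parentGraph_adj_parent hv).reachable

theorem edgeSet_parentGraph_subset {parent : V → V} {root : V} (hroot : parent root = root) :
    (parentGraph parent).edgeSet ⊆ (fun v => s(v, parent v)) '' {root}ᶜ := by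
  intro e
  induction e with
  | _ u v =>
    rw [SimpleGraph.mem_edgeSet, parentGraph, SimpleGraph.fromRel_adj]
    rintro ⟨hne, rfl | rfl⟩
    · exact ⟨u, by rintro rfl; exact hne hroot.symm, rfl⟩
    · exact ⟨v, by rintro rfl; exact hne hroot, Sym2.eq_swap⟩

theorem isTree_parentGraph [Finite V] {parent : V → V} {root : V} (hroot : parent root = root)
    (hparent : ∀ v, ∃ k, parent^[k] v = root) : (parentGraph parent).IsTree := by
  have reachable_root (v : V) : (parentGraph parent).Reachable v root := by
    obtain ⟨k, hk⟩ := hparent v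
    exact hk ▸ parentGraph_reachable_iterate parent k v
  have connected : (parentGraph parent).Connected :=
    { preconnected := fun u v => (reachable_root u).trans (reachable_root v).symm
      nonempty := ⟨root⟩ }
  refine SimpleGraph.isTree_iff_connected_and_card.2
    ⟨connected, le_antisymm ?_ connected.card_vert_le_card_edgeSet_add_one⟩
  calc Nat.card (parentGraph parent).edgeSet + 1
      ≤ ((fun v => s(v, parent v)) '' {root}ᶜ).ncard + 1 :=
        Nat.add_le_add_right (Set.ncard_le_ncard (edgeSet_parentGraph_subset hroot)) 1
    _ ≤ ({root}ᶜ : Set V).ncard + 1 := Nat.add_le_add_right Set.ncard_image_le 1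
    _ = Nat.card V := by
        rw [← Set.ncard_singleton root, add_comm, Set.ncard_add_ncard_compl]

/-- The pairs of vertices with one member in `A` and the other outside `A`. -/
def cut (A : Set V) : Set (Sym2 V) :=
  {e | (∃ u ∈ e, u ∈ A) ∧ ∃ v ∈ e, v ∉ A}

theorem mk_mem_cut {A : Set V} {u v : V} : s(u, v) ∈ cut A ↔ ¬(u ∈ A ↔ v ∈ A) := by
  simp only [cut, Set.mem_ofPred_eq, Sym2.mem_iff, exists_eq_or_imp, exists_eq_left]
  tauto

section Cut

variable {G : SimpleGraph V} {A : Set V} {u v : V}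

theorem support_subset_of_isAcyclic (hG : G.IsAcyclic) (hA : (G.induce A).Preconnected)
    {p : G.Walk u v} (hp : p.IsPath) (hu : u ∈ A) (hv : v ∈ A) : ∀ w ∈ p.support, w ∈ A := by
  obtain ⟨q, hq⟩ := (hA ⟨u, hu⟩ ⟨v, hv⟩).exists_isPath
  let inclusion := SimpleGraph.Embedding.induce (G := G) A
  have p_eq_map : p = q.map inclusion.toHom :=
    congrArg Subtype.val <| (hG.subsingleton_path u v).elim ⟨p, hp⟩ ⟨_, hq.map inclusion.injective⟩
  have support_eq : p.support = q.support.map Subtype.val := by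
    rw [p_eq_map]
    exact SimpleGraph.Walk.support_map _ _
  intro w hw
  obtain ⟨a, -, rfl⟩ := List.mem_map.1 (support_eq ▸ hw)
  exact a.2

variable [DecidablePred (· ∈ cut A)]

theorem countP_cut_edges_eq_zero {p : G.Walk u v}
    (hp : (∀ w ∈ p.support, w ∈ A) ∨ ∀ w ∈ p.support, w ∉ A) :
    p.edges.countP (· ∈ cut A) = 0 := by
  simp only [List.countP_eq_zero, decide_eq_true_eq]
  intro e
  induction e with
  | _ a b =>
    intro he
    have ha := p.fst_mem_support_of_mem_edges he
    have hb := p.snd_mem_support_of_mem_edges he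
    rw [mk_mem_cut, not_not]
    rcases hp with hp | hp <;> simp only [hp a ha, hp b hb]

theorem countP_cut_edges_le_one (hG : G.IsAcyclic) (hA : (G.induce A).Preconnected)
    {p : G.Walk u v} (hp : p.IsPath) (hu : u ∈ A) : p.edges.countP (· ∈ cut A) ≤ 1 := by
  classical
  induction p with
  | nil => simp
  | @cons u w v huw p ih =>
    rw [SimpleGraph.Walk.edges_cons, List.countP_cons]
    by_cases hw : w ∈ A
    · have not_cut : s(u, w) ∉ cut A := by simp [mk_mem_cut, hu, hw]
      simpa [not_cut] using ih hp.of_cons hw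
    · have outside : ∀ x ∈ p.support, x ∉ A := by
        intro x hx hxA
        have path_to_x : (SimpleGraph.Walk.cons huw (p.takeUntil x hx)).IsPath :=
          (hp.of_cons.takeUntil hx).cons fun h =>
            ((SimpleGraph.Walk.cons_isPath_iff huw p).1 hp).2
              (p.support_takeUntil_subset_support hx h)
        exact hw (support_subset_of_isAcyclic hG hA path_to_x hu hxA w (by simp))
      rw [countP_cut_edges_eq_zero (Or.inr outside)]
      split <;> simp

theorem countP_cut_edges_le_two (hG : G.IsAcyclic) (hA : (G.induce A).Preconnected)
    {p : G.Walk u v} (hp : p.IsPath) : p.edges.countP (· ∈ cut A) ≤ 2 := by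
  induction p with
  | nil => simp
  | @cons u w v huw p ih =>
    rw [SimpleGraph.Walk.edges_cons, List.countP_cons]
    by_cases hw : w ∈ A
    · have := countP_cut_edges_le_one hG hA hp.of_cons hw
      split <;> omega
    · by_cases hu : u ∈ A
      · have := countP_cut_edges_le_one hG hA hp hu
        rw [SimpleGraph.Walk.edges_cons, List.countP_cons] at this
        omega
      · have not_cut : s(u, w) ∉ cut A := by simp [mk_mem_cut, hu, hw]
        simpa [not_cut] using ih hp.of_cons

end Cut

/-- The edge labeling induced by a vertex coloring `c`: an edge having an end of color `0` gets the
color of its other end, and all other edges get the label `0`. -/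
def crossLabel [Zero α] [DecidableEq α] (c : V → α) : Sym2 V → α :=
  Sym2.lift ⟨fun u v => if c u = 0 then c v else if c v = 0 then c u else 0, by
    intro u v
    grind⟩

section CrossLabel

variable [Zero α] [DecidableEq α] {c : V → α} {u v : V}

theorem crossLabel_of_left_eq_zero (hu : c u = 0) : crossLabel c s(u, v) = c v := by
  simp [crossLabel, hu]

theorem crossLabel_of_right_eq_zero (hv : c v = 0) : crossLabel c s(u, v) = c u := by
  rw [Sym2.eq_swap, crossLabel_of_left_eq_zero hv]

theorem crossLabel_of_eq (h : c u = c v) : crossLabel c s(u, v) = 0 := by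
  simp only [crossLabel, Sym2.lift_mk, h]
  grind

theorem mem_cut_of_crossLabel_ne_zero {e : Sym2 V} (he : crossLabel c e ≠ 0) :
    e ∈ cut {v | c v = 0} := by
  induction e with
  | _ u v =>
    rw [mk_mem_cut]
    simp only [crossLabel, Sym2.lift_mk] at he
    grind

theorem countP_ne_zero_le_two_of_mem_pathWords {G : SimpleGraph V} (hG : G.IsAcyclic)
    (hc : (G.induce {v | c v = 0}).Preconnected) {l : List α}
    (hl : l ∈ pathWords G (crossLabel c)) : l.countP (· ≠ 0) ≤ 2 := by
  classical
  obtain ⟨u, v, p, hp, rfl⟩ := hl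
  calc (p.edges.map (crossLabel c)).countP (· ≠ 0)
      = p.edges.countP (crossLabel c · ≠ 0) := List.countP_map
    _ ≤ p.edges.countP (· ∈ cut {v | c v = 0}) := List.countP_mono_left fun e _ he => by
        simpa using mem_cut_of_crossLabel_ne_zero (by simpa using he)
    _ ≤ 2 := countP_cut_edges_le_two hG hc hp

end CrossLabel

theorem isPath_append_cons {G : SimpleGraph V} {u v w x : V} {p : G.Walk u v} {q : G.Walk w x}
    (hp : p.IsPath) (hq : q.IsPath) (hvw : G.Adj v w) (hpq : p.support.Disjoint q.support) :
    (p.append (.cons hvw q)).IsPath := by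
  rw [SimpleGraph.Walk.isPath_def, SimpleGraph.Walk.support_append]
  exact hp.support_nodup.append hq.support_nodup hpq

theorem replicate_append_cons_inj {a b c : α} {l l' : List α} {m n : ℕ} (hb : b ≠ a)
    (hc : c ≠ a) (h : List.replicate m a ++ b :: l = List.replicate n a ++ c :: l') :
    m = n ∧ b = c ∧ l = l' := by
  induction m generalizing n with
  | zero =>
    cases n with
    | zero => simpa using h
    | succ n => exact absurd (List.cons.inj h).1 hb
  | succ m ih =>
    cases n with
    | zero => exact absurd (List.cons.inj h).1.symm hc
    | succ n =>
      obtain ⟨hmn, htail⟩ := ih (List.cons.inj h).2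
      exact ⟨congrArg (· + 1) hmn, htail⟩

end

/-- The vertices of the extremal tree: a spider with `s + 1` legs of `N + 1` vertices each, where
every leg `b ≠ 0` is attached by an edge from `leg 0 0` to `leg b 0`, and where leg `0` carries `s`
pendant hairs at each of its vertices other than `leg 0 0`; `hair x i` hangs at `leg 0 (i + 1)`. -/
inductive HairySpider (s N : ℕ)
  | leg (b : Fin (s + 1)) (k : Fin (N + 1))
  | hair (x : Fin s) (i : Fin N)

namespace HairySpider

variable {s N : ℕ}

/-- The vertices of the spider, legs first, as a sum of two grids; used for counting. -/
def equivSum (s N : ℕ) : HairySpider s N ≃ (Fin (s + 1) × Fin (N + 1)) ⊕ (Fin s × Fin N) where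
  toFun
    | leg b k => .inl (b, k)
    | hair x i => .inr (x, i)
  invFun
    | .inl (b, k) => leg b k
    | .inr (x, i) => hair x i
  left_inv := by rintro (_ | _) <;> rfl
  right_inv := by rintro (_ | _) <;> rfl

instance : Finite (HairySpider s N) :=
  .of_equiv _ (equivSum s N).symm

theorem card_eq (s N : ℕ) : Nat.card (HairySpider s N) = (N + 1) * (s + 1) + s * N := by
  simp [Nat.card_congr (equivSum s N), mul_comm (N + 1)]

/-- The parent of a vertex when the spider is rooted at `leg 0 0`, which is its own parent. -/
def parent : HairySpider s N → HairySpider s N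
  | leg b k => Fin.cases (leg 0 0) (fun k => leg b k.castSucc) k
  | hair _ i => leg 0 i.succ

/-- The spider graph. -/
def graph (s N : ℕ) : SimpleGraph (HairySpider s N) :=
  parentGraph parent

/-- The vertex coloring whose `crossLabel` is the edge labeling of the spider: it labels the first
edge of leg `b` by `b`, the edge of `hair x i` by `x + 1`, and all other edges by `0`. -/
def color : HairySpider s N → Fin (s + 1)
  | leg b _ => b
  | hair x _ => x.succ

theorem exists_iterate_parent_leg (b : Fin (s + 1)) (k : Fin (N + 1)) :
    ∃ m, parent^[m] (leg b k) = leg 0 0 := by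
  induction k using Fin.induction with
  | zero => exact ⟨1, rfl⟩
  | succ k ih =>
    obtain ⟨m, hm⟩ := ih
    exact ⟨m + 1, hm⟩

theorem isTree_graph (s N : ℕ) : (graph s N).IsTree := by
  refine isTree_parentGraph (root := leg 0 0) rfl ?_
  rintro (⟨b, k⟩ | ⟨x, i⟩)
  · exact exists_iterate_parent_leg b k
  · obtain ⟨m, hm⟩ := exists_iterate_parent_leg (s := s) 0 i.succ
    exact ⟨m + 1, hm⟩

theorem adj_leg_succ (b : Fin (s + 1)) (k : Fin N) :
    (graph s N).Adj (leg b k.succ) (leg b k.castSucc) :=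
  parentGraph_adj_parent (v := leg b k.succ) fun h => by
    simpa [Fin.ext_iff] using (leg.inj h).2

theorem adj_center {b : Fin (s + 1)} (hb : b ≠ 0) : (graph s N).Adj (leg 0 0) (leg b 0) :=
  (parentGraph_adj_parent (v := leg b 0) fun h => hb (leg.inj h).1).symm

theorem adj_hair (x : Fin s) (i : Fin N) : (graph s N).Adj (hair x i) (leg 0 i.succ) :=
  parentGraph_adj_parent (v := hair x i) nofun

theorem exists_path_leg (b : Fin (s + 1)) (k : Fin (N + 1)) :
    ∃ p : (graph s N).Walk (leg b k) (leg b 0), p.IsPath ∧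
      p.edges.map (crossLabel color) = List.replicate k 0 ∧
      ∀ w, w ∈ p.support ↔ ∃ j ≤ k, w = leg b j := by
  induction k using Fin.induction with
  | zero => exact ⟨.nil, .nil, rfl, by simp⟩
  | succ k ih =>
    obtain ⟨p, hp, labels, support⟩ := ih
    refine ⟨.cons (adj_leg_succ b k) p, hp.cons ?_, ?_, fun w => ?_⟩
    · rw [support]
      rintro ⟨j, hj, h⟩
      exact (Fin.castSucc_lt_succ.trans_le ((leg.inj h).2.trans_le hj)).false
    · rw [SimpleGraph.Walk.edges_cons, List.map_cons, labels,
        crossLabel_of_eq (c := color) (u := leg b k.succ) (v := leg b k.castSucc) rfl]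
      rfl
    · rw [SimpleGraph.Walk.support_cons, List.mem_cons, support]
      constructor
      · rintro (rfl | ⟨j, hj, rfl⟩)
        · exact ⟨k.succ, le_rfl, rfl⟩
        · exact ⟨j, hj.trans Fin.castSucc_lt_succ.le, rfl⟩
      · rintro ⟨j, hj, rfl⟩
        rcases hj.eq_or_lt with rfl | hj
        · exact .inl rfl
        · exact .inr ⟨j, Fin.le_castSucc_iff.2 hj, rfl⟩

theorem preconnected_induce_color_eq_zero (s N : ℕ) :
    ((graph s N).induce {v | color v = 0}).Preconnected := by
  obtain ⟨p, -, -, support⟩ := exists_path_leg (s := s) 0 (Fin.last N)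
  have eq_support : {v : HairySpider s N | color v = 0} = {v | v ∈ p.support} := by
    ext v
    rcases v with ⟨b, k⟩ | ⟨x, i⟩ <;> simp [support, color, Fin.le_last]
  rw [eq_support]
  exact p.connected_induce_support.preconnected

theorem hair_leg_mem_pathWords (x y : Fin s) (i : Fin N) (k : Fin (N + 1)) :
    x.succ :: (List.replicate (i + 1) 0 ++ y.succ :: List.replicate k 0) ∈
      pathWords (graph s N) (crossLabel color) := by
  obtain ⟨p, hp, p_labels, p_support⟩ := exists_path_leg (0 : Fin (s + 1)) i.succ
  obtain ⟨q, hq, q_labels, q_support⟩ := exists_path_leg y.succ k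
  have hpq : p.support.Disjoint q.reverse.support := by
    intro w hwp hwq
    rw [SimpleGraph.Walk.support_reverse, List.mem_reverse, q_support] at hwq
    obtain ⟨j, -, rfl⟩ := (p_support w).1 hwp
    obtain ⟨j', -, h⟩ := hwq
    exact Fin.succ_ne_zero y (leg.inj h).1.symm
  have path := isPath_append_cons hp hq.reverse (adj_center (Fin.succ_ne_zero y)) hpq
  refine ⟨hair x i, leg y.succ k, .cons (adj_hair x i) _, path.cons ?_, ?_⟩
  · simp [p_support, q_support]
  · have hair_label : crossLabel color s(hair x i, leg 0 i.succ) = x.succ :=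
      crossLabel_of_right_eq_zero (c := color) (u := hair x i) (v := leg 0 i.succ) rfl
    have center_label : crossLabel color s((leg 0 0 : HairySpider s N), leg y.succ 0) = y.succ :=
      crossLabel_of_left_eq_zero (c := color) (u := leg 0 0) (v := leg y.succ 0) rfl
    simp [p_labels, q_labels, hair_label, center_label]

/-- The word `x 0ⁱ y 0ʲ z` with `x, y, z` nonzero letters and `1 ≤ i, j ≤ N`, given by the
predecessors of its three letters and two exponents. -/
def absentWord (a : Fin 3 → Fin s) (k : Fin 2 → Fin N) : List (Fin (s + 1)) :=
  (a 0).succ :: (List.replicate (k 0 + 1) 0 ++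
    (a 1).succ :: (List.replicate (k 1 + 1) 0 ++ [(a 2).succ]))

theorem absentWord_mem_maw (a : Fin 3 → Fin s) (k : Fin 2 → Fin N) :
    absentWord a k ∈ MAW (pathWords (graph s N) (crossLabel color)) := by
  refine ⟨?_, fun h => ?_, ?_, ?_⟩
  · simp only [absentWord, List.length_cons, List.length_append]
    omega
  · have := countP_ne_zero_le_two_of_mem_pathWords (isTree_graph s N).isAcyclic
      (preconnected_induce_color_eq_zero s N) h
    simp [absentWord, List.countP_replicate] at this
  · simpa [absentWord] using
      reverse_mem_pathWords (hair_leg_mem_pathWords (a 2) (a 1) (k 1) (k 0).succ)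
  · have eq_concat : absentWord a k =
        ((a 0).succ :: (List.replicate (k 0 + 1) 0 ++
          (a 1).succ :: List.replicate (k 1 + 1) 0)) ++ [(a 2).succ] := by
      simp [absentWord]
    rw [eq_concat, List.dropLast_concat]
    exact hair_leg_mem_pathWords (a 0) (a 1) (k 0) (k 1).succ

theorem absentWord_injective : Function.Injective fun t : (Fin 3 → Fin s) × (Fin 2 → Fin N) =>
    absentWord t.1 t.2 := by
  rintro ⟨a, k⟩ ⟨a', k'⟩ h
  obtain ⟨h0, h⟩ := List.cons.inj h
  obtain ⟨hk0, h1, h⟩ :=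
    replicate_append_cons_inj (Fin.succ_ne_zero _) (Fin.succ_ne_zero _) h
  obtain ⟨hk1, h2, -⟩ :=
    replicate_append_cons_inj (Fin.succ_ne_zero _) (Fin.succ_ne_zero _) h
  ext i
  · fin_cases i <;> simp_all
  · fin_cases i <;> simp_all

theorem le_ncard_maw (s N : ℕ) :
    s ^ 3 * N ^ 2 ≤ (MAW (pathWords (graph s N) (crossLabel color))).ncard := by
  calc s ^ 3 * N ^ 2 = Nat.card ((Fin 3 → Fin s) × (Fin 2 → Fin N)) := by simp
    _ = (Set.range fun t : (Fin 3 → Fin s) × (Fin 2 → Fin N) => absentWord t.1 t.2).ncard :=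
        (Set.ncard_range_of_injective absentWord_injective).symm
    _ ≤ _ := Set.ncard_le_ncard
        (Set.range_subset_iff.2 fun t => absentWord_mem_maw t.1 t.2)
        (finite_maw (finite_pathWords _ _))

end HairySpider

/-- For all `s ≥ 1` and `N ≥ 1`, with `n = (N+1)(s+1) + s·N`, there is an edge-labeled
unrooted tree on `n` nodes over the alphabet `Fin (s+1)` whose path language has at least
`s³·N²` minimal absent words. -/
theorem maw_unrooted_tree_lower_bound (s N : ℕ) (hs : 1 ≤ s) (hN : 1 ≤ N) :
    ∃ G : SimpleGraph (Fin ((N + 1) * (s + 1) + s * N)), ∃ _ : G.IsTree,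
      ∃ f : G.edgeSet → Fin (s + 1),
        s ^ 3 * N ^ 2 ≤ (MAW (pathLang G f)).ncard := by
  let e := (Finite.equivFinOfCardEq (HairySpider.card_eq s N)).symm
  let φ := SimpleGraph.Iso.comap e (HairySpider.graph s N)
  let g := crossLabel HairySpider.color ∘ Sym2.map φ
  refine ⟨(HairySpider.graph s N).comap e, φ.isTree_iff.2 (HairySpider.isTree_graph s N),
    fun x => g x, ?_⟩
  rw [pathLang_eq_pathWords, pathWords_comp_map_iso]
  exact HairySpider.le_ncard_maw s N
end
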